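/- Let (K_{i(e)}, w_e, p_e)_{e∈E} be a contractive Markov system with average contracting rate 0 < a < 1 satisfying the standing assumptions, with invariant Borel probability measure μ, generalized Markov measure M on Σ = E^ℤ, left shift S, and coding map F. If ∑_{i=1}^N ∫_{K_i} d(x, x_i) dμ(x) < ∞ for some points x_i ∈ K_i (i = 1,…,N), then the Kolmogorov–Sinai entropy of S with respect to M equals h_M(S) = −∑_{e∈E} ∫_{K_{i(e)}} p_e log p_e d(F_*M), where F_*M is the pushforward of M under F (with the convention 0 log 0 = 0). -/

import Mathlib

open MeasureTheory Filter ENNReal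

/-- The modulus of uniform continuity of a real-valued function on a
(pseudo)metric space, valued in `ℝ≥0∞`. -/
noncomputable def modulus {X : Type*} [PseudoMetricSpace X] (h : X → ℝ) (t : ℝ) : ℝ≥0∞ :=
  ⨆ (x : X) (y : X) (_ : dist x y ≤ t), ENNReal.ofReal |h x - h y|

/-- A function is Dini-continuous if `∫_0^c φ(t)/t dt < ∞` for some `c > 0`,
where `φ` is its modulus of uniform continuity. -/
def DiniContinuous {X : Type*} [PseudoMetricSpace X] (h : X → ℝ) : Prop :=
  ∃ c > (0 : ℝ), ∫⁻ t in Set.Ioc (0 : ℝ) c, modulus h t / ENNReal.ofReal t < ⊤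

/-- A Markov system on a metric space `K`, with vertex set `Fin N` and edge set `E`. -/
structure MarkovSystem (K : Type*) [MetricSpace K] [MeasurableSpace K]
    (N : ℕ) (E : Type*) [Fintype E] where
  /-- initial vertex of an edge -/
  edgeI : E → Fin N
  /-- terminal vertex of an edge -/
  edgeT : E → Fin N
  /-- the partition `K_1, …, K_N` of `K` -/
  Ki : Fin N → Set K
  Ki_nonempty : ∀ v, (Ki v).Nonempty
  Ki_measurable : ∀ v, MeasurableSet (Ki v)
  Ki_disjoint : ∀ v v', v ≠ v' → Disjoint (Ki v) (Ki v')
  Ki_cover : ∀ x : K, ∃ v, x ∈ Ki v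
  /-- the maps `w_e` -/
  w : E → K → K
  w_measurable : ∀ e, Measurable (w e)
  w_mapsTo : ∀ e, Set.MapsTo (w e) (Ki (edgeI e)) (Ki (edgeT e))
  /-- the probability functions `p_e` -/
  p : E → K → ℝ
  p_measurable : ∀ e, Measurable (p e)
  p_nonneg : ∀ e x, 0 ≤ p e x
  p_sum_one : ∀ x : K, ∑ e, p e x = 1
  p_eq_zero : ∀ e, ∀ x : K, x ∉ Ki (edgeI e) → p e x = 0

namespace MarkovSystem

variable {K : Type*} [MetricSpace K] [MeasurableSpace K] {N : ℕ} {E : Type*} [Fintype E]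

/-- Condition of contractiveness on average with rate `a`. -/
def ContractiveOnAvg (sys : MarkovSystem K N E) (a : ℝ) : Prop :=
  ∀ v : Fin N, ∀ x ∈ sys.Ki v, ∀ y ∈ sys.Ki v,
    ∑ e, sys.p e x * dist (sys.w e x) (sys.w e y) ≤ a * dist x y

/-- `μ` is an invariant Borel probability measure of the Markov system:
`∫ Uf dμ = ∫ f dμ` for every bounded Borel measurable `f`. -/
def IsInvariant (sys : MarkovSystem K N E) (μ : Measure K) : Prop :=
  IsProbabilityMeasure μ ∧
  ∀ f : K → ℝ, Measurable f → (∃ B, ∀ x, |f x| ≤ B) →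
    ∫ x, (∑ e, sys.p e x * f (sys.w e x)) ∂μ = ∫ x, f x ∂μ

end MarkovSystem

/-- `wordProb w p (e₁ :: … :: eₖ) x = p_{e₁}(x) p_{e₂}(w_{e₁}x) ⋯ p_{eₖ}(w_{e_{k-1}} ∘ ⋯ ∘ w_{e₁}x)`. -/
def wordProb {K E : Type*} (w : E → K → K) (p : E → K → ℝ) : List E → K → ℝ
  | [], _ => 1
  | e :: l, x => p e x * wordProb w p l (w e x)

/-- `wordMap w (e₁ :: … :: eₖ) = w_{eₖ} ∘ ⋯ ∘ w_{e₁}`. -/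
def wordMap {K E : Type*} (w : E → K → K) : List E → K → K
  | [], x => x
  | e :: l, x => wordMap w l (w e x)

/-- `M` is the generalized Markov measure on `Σ = E^ℤ` associated with the Markov
system and the invariant measure `μ`. -/
def IsMarkovMeasure {K : Type*} [MetricSpace K] [MeasurableSpace K] {N : ℕ}
    {E : Type*} [Fintype E] [MeasurableSpace E]
    (sys : MarkovSystem K N E) (μ : Measure K) (M : Measure (ℤ → E)) : Prop :=
  IsProbabilityMeasure M ∧
  ∀ (m : ℤ) (es : List E),
    M {σ : ℤ → E | ∀ j : Fin es.length, σ (m + (j : ℕ)) = es.get j}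
      = ENNReal.ofReal (∫ x, wordProb sys.w sys.p es x ∂μ)

/-- The left shift on `E^ℤ`. -/
def shift {E : Type*} (σ : ℤ → E) : ℤ → E := fun k => σ (k + 1)

/-- `comps w σ m = w_{σ₀} ∘ w_{σ₋₁} ∘ ⋯ ∘ w_{σ₋ₘ}`. -/
def comps {K E : Type*} (w : E → K → K) (σ : ℤ → E) : ℕ → K → K
  | 0 => w (σ 0)
  | n + 1 => fun x => comps w σ n (w (σ (-((n : ℤ) + 1))) x)

/-- `F` is the coding map of the contractive Markov system:
`F(σ) = lim_{m → -∞} w_{σ₀} ∘ ⋯ ∘ w_{σₘ} x_{i(σₘ)}` for `M`-a.e. `σ`. -/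
def IsCodingMap {K : Type*} [MetricSpace K] [MeasurableSpace K] {N : ℕ}
    {E : Type*} [Fintype E] [MeasurableSpace E]
    (sys : MarkovSystem K N E) (M : Measure (ℤ → E)) (F : (ℤ → E) → K) : Prop :=
  Measurable F ∧ ∃ xs : Fin N → K, (∀ v, xs v ∈ sys.Ki v) ∧
    ∀ᵐ σ ∂M, Filter.Tendsto
      (fun m : ℕ => comps sys.w σ m (xs (sys.edgeI (σ (-(m : ℤ))))))
      Filter.atTop (nhds (F σ))

/-- Entropy of the finite measurable partition given by the fibers of `π`. -/
noncomputable def partEntropy {Ω : Type*} [MeasurableSpace Ω] (M : Measure Ω)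
    {F : Type*} [Fintype F] (π : Ω → F) : ℝ :=
  -∑ f : F, ((M (π ⁻¹' {f})).toReal * Real.log (M (π ⁻¹' {f})).toReal)

/-- The Kolmogorov–Sinai entropy of a measure-preserving transformation `S`
with respect to `M`: the supremum over all finite measurable partitions `π` of
`inf_n (1/n) H(⋁_{i=0}^{n-1} S^{-i} π)`. -/
noncomputable def ksEntropy {Ω : Type*} [MeasurableSpace Ω] (M : Measure Ω) (S : Ω → Ω) : ℝ≥0∞ :=
  ⨆ (k : ℕ) (π : Ω → Fin k) (_ : ∀ j, MeasurableSet (π ⁻¹' {j})),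
    ⨅ n : ℕ, ENNReal.ofReal (((n : ℝ) + 1)⁻¹ *
      partEntropy M (fun ω => fun j : Fin (n + 1) => π (S^[(j : ℕ)] ω)))

/-!
Write `h = ∫ ∑ e, -p_e log p_e dμ`. The fibres of the coordinate `σ ↦ σ 0` form a generating
partition, so by Kolmogorov–Sinai `h_M(S) = lim H_n / n`, where `H_n` is the entropy of the
distribution `u ↦ ∫ P_u dμ` of words of length `n`, and `P_u(x)` is the probability of `u` started
at `x`. By the chain rule and invariance, the entropy of `u ↦ P_u(x)` has `μ`-integral exactly
`n h`, so Jensen's inequality gives `n h ≤ H_n`. Conversely, Gibbs' inequality with reference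
measure `u ↦ ∑ v, P_u(x_v)` bounds `H_n` by `n h + N - 1` plus the `μ`-integral of the relative
entropy of `u ↦ P_u(x)` with respect to `u ↦ P_u(x_v)`, where `x ∈ K_v`. Uniform continuity of
`log p_e` bounds each step of this relative entropy by `ε` plus a multiple of the current distance
of the two orbits; contraction on average makes the sum of these distances at most
`d(x, x_v) / (1 - a)`, which is integrable. Finally `F_* M = μ`, because against Lipschitz functions
the image of `x_v` under a word of length `n` differs on average from the image of `x` by
`O(a ^ n d(x, x_v))`.
-/

section FinitePartitions

variable {Ω : Type*} [MeasurableSpace Ω] {M : Measure Ω}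
  {α β γ : Type*} [Fintype α] [Fintype β]

theorem sum_negMulLog_le {p q : α → ℝ} (hp : ∀ i, 0 ≤ p i) (hq : ∀ i, 0 ≤ q i)
    (hpq : ∀ i, 0 < p i → 0 < q i) :
    ∑ i, Real.negMulLog (p i) ≤ ∑ i, p i * -Real.log (q i) + (∑ i, q i - ∑ i, p i) := by
  rw [← Finset.sum_sub_distrib, ← Finset.sum_add_distrib]
  refine Finset.sum_le_sum fun i _ => ?_
  rcases (hp i).eq_or_lt with h0 | h0
  · simpa [← h0] using hq i
  · have hlog := Real.log_le_sub_one_of_pos (div_pos (hpq i h0) h0)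
    rw [Real.log_div (hpq i h0).ne' h0.ne'] at hlog
    calc Real.negMulLog (p i)
        = p i * -Real.log (q i) + p i * (Real.log (q i) - Real.log (p i)) := by
          rw [Real.negMulLog]; ring
      _ ≤ p i * -Real.log (q i) + p i * (q i / p i - 1) := by gcongr
      _ = p i * -Real.log (q i) + (q i - p i) := by field_simp

theorem partEntropy_eq_sum_negMulLog (M : Measure Ω) (X : Ω → α) :
    partEntropy M X = ∑ s, Real.negMulLog (M.real (X ⁻¹' {s})) := by
  simp only [partEntropy, Real.negMulLog, measureReal_def, neg_mul, Finset.sum_neg_distrib]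

theorem ae_measureReal_fiber_pos {ι : Type*} [Countable ι] (M : Measure Ω) [IsFiniteMeasure M]
    (X : Ω → ι) : ∀ᵐ ω ∂M, 0 < M.real (X ⁻¹' {X ω}) := by
  have hnull : ∀ᵐ ω ∂M, ∀ s, M (X ⁻¹' {s}) = 0 → X ω ≠ s :=
    ae_all_iff.2 fun s => eventually_imp_distrib_left.2 measure_eq_zero_iff_ae_notMem.1
  filter_upwards [hnull] with ω hω
  exact ENNReal.toReal_pos (fun h => hω _ h rfl) (measure_ne_top _ _)

theorem partEntropy_nonneg [IsProbabilityMeasure M] (X : Ω → α) : 0 ≤ partEntropy M X := by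
  rw [partEntropy_eq_sum_negMulLog]
  exact Finset.sum_nonneg fun s _ => Real.negMulLog_nonneg measureReal_nonneg measureReal_le_one

variable [MeasurableSpace α] [MeasurableSingletonClass α]
  [MeasurableSpace β] [MeasurableSingletonClass β] {X : Ω → α} {Y : Ω → β}

theorem partEntropy_comp_measurePreserving {T : Ω → Ω} (hT : MeasurePreserving T M M)
    (hX : Measurable X) : partEntropy M (fun ω => X (T ω)) = partEntropy M X := by
  have hfiber (s : α) : M.real ((fun ω => X (T ω)) ⁻¹' {s}) = M.real (X ⁻¹' {s}) :=
    hT.measureReal_preimage (hX (measurableSet_singleton s)).nullMeasurableSet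
  simp only [partEntropy_eq_sum_negMulLog, hfiber]

section FiniteMeasure

variable [IsFiniteMeasure M]

theorem integrable_comp_of_finite {ι : Type*} [Finite ι] [MeasurableSpace ι]
    [MeasurableSingletonClass ι] {X : Ω → ι} (hX : Measurable X) (G : ι → ℝ) :
    Integrable (fun ω => G (X ω)) M :=
  Integrable.comp_measurable .of_finite hX

theorem integral_comp_eq_sum (hX : Measurable X) (G : α → ℝ) :
    ∫ ω, G (X ω) ∂M = ∑ s, M.real (X ⁻¹' {s}) * G s := by
  rw [← integral_map hX.aemeasurable (measurable_of_finite G).aestronglyMeasurable,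
    integral_fintype .of_finite]
  simp only [map_measureReal_apply hX (measurableSet_singleton _), smul_eq_mul]

theorem partEntropy_eq_integral (hX : Measurable X) :
    partEntropy M X = ∫ ω, -Real.log (M.real (X ⁻¹' {X ω})) ∂M := by
  rw [integral_comp_eq_sum hX fun s => -Real.log (M.real (X ⁻¹' {s})),
    partEntropy_eq_sum_negMulLog]
  simp only [Real.negMulLog, neg_mul, mul_neg]

theorem partEntropy_comp_le (hX : Measurable X) (f : α → β) :
    partEntropy M (fun ω => f (X ω)) ≤ partEntropy M X := by
  have hfX : Measurable fun ω => f (X ω) := (measurable_of_finite f).comp hX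
  rw [partEntropy_eq_integral hfX, partEntropy_eq_integral hX]
  refine integral_mono_ae (integrable_comp_of_finite hX fun s =>
    -Real.log (M.real ((fun ω => f (X ω)) ⁻¹' {f s}))) (integrable_comp_of_finite hX fun s =>
    -Real.log (M.real (X ⁻¹' {s}))) ?_
  filter_upwards [ae_measureReal_fiber_pos M X] with ω hω
  refine neg_le_neg (Real.log_le_log hω (measureReal_mono ?_))
  rintro ω' (h : X ω' = X ω)
  exact congrArg f h

end FiniteMeasure

variable [IsProbabilityMeasure M]

theorem sum_measureReal_fiber (hX : Measurable X) : ∑ s, M.real (X ⁻¹' {s}) = 1 := by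
  simpa using (integral_comp_eq_sum (M := M) hX fun _ => 1).symm

theorem partEntropy_le_integral_neg_log (hX : Measurable X) {Q : α → ℝ} (hQ0 : ∀ s, 0 ≤ Q s)
    (hQ1 : ∑ s, Q s ≤ 1) (hpos : ∀ᵐ ω ∂M, 0 < Q (X ω)) :
    partEntropy M X ≤ ∫ ω, -Real.log (Q (X ω)) ∂M := by
  have hQpos (s : α) (hs : 0 < M.real (X ⁻¹' {s})) : 0 < Q s := by
    obtain ⟨ω, hω, hQω⟩ :=
      Measure.exists_mem_of_measure_ne_zero_of_ae ((measureReal_ne_zero_iff).1 hs.ne')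
        (ae_restrict_of_ae hpos)
    rwa [show X ω = s from hω] at hQω
  rw [integral_comp_eq_sum hX fun s => -Real.log (Q s), partEntropy_eq_sum_negMulLog]
  have := sum_negMulLog_le (fun s => measureReal_nonneg) hQ0 hQpos
  rw [sum_measureReal_fiber hX] at this
  linarith

theorem partEntropy_prodMk_le (hX : Measurable X) (hY : Measurable Y) {R : β → α → ℝ}
    (hR0 : ∀ t s, 0 ≤ R t s) (hR1 : ∀ t, ∑ s, R t s ≤ 1) (hpos : ∀ᵐ ω ∂M, 0 < R (Y ω) (X ω)) :
    partEntropy M (fun ω => (X ω, Y ω)) ≤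
      partEntropy M Y + ∫ ω, -Real.log (R (Y ω) (X ω)) ∂M := by
  have hXY : Measurable fun ω => (X ω, Y ω) := hX.prodMk hY
  let Q : α × β → ℝ := fun z => M.real (Y ⁻¹' {z.2}) * R z.2 z.1
  have hQ1 : ∑ z, Q z ≤ 1 := by
    rw [Fintype.sum_prod_type_right, ← sum_measureReal_fiber (M := M) hY]
    refine Finset.sum_le_sum fun t _ => ?_
    simp only [Q, ← Finset.mul_sum]
    exact mul_le_of_le_one_right measureReal_nonneg (hR1 t)
  calc partEntropy M (fun ω => (X ω, Y ω)) ≤ ∫ ω, -Real.log (Q (X ω, Y ω)) ∂M := by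
        refine partEntropy_le_integral_neg_log hXY (fun z => mul_nonneg measureReal_nonneg
          (hR0 _ _)) hQ1 ?_
        filter_upwards [ae_measureReal_fiber_pos M Y, hpos] with ω hY hR using mul_pos hY hR
    _ = ∫ ω, (-Real.log (M.real (Y ⁻¹' {Y ω})) + -Real.log (R (Y ω) (X ω))) ∂M := by
        refine integral_congr_ae ?_
        filter_upwards [ae_measureReal_fiber_pos M Y, hpos] with ω hY hR
        rw [Real.log_mul hY.ne' hR.ne', neg_add]
    _ = partEntropy M Y + ∫ ω, -Real.log (R (Y ω) (X ω)) ∂M := by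
        rw [integral_add
          (integrable_comp_of_finite hY fun t => -Real.log (M.real (Y ⁻¹' {t})))
          (integrable_comp_of_finite hXY fun z => -Real.log (R z.2 z.1)),
          partEntropy_eq_integral hY]

theorem partEntropy_prodMk_le_add (hX : Measurable X) (hY : Measurable Y) :
    partEntropy M (fun ω => (X ω, Y ω)) ≤ partEntropy M X + partEntropy M Y := by
  rw [add_comm, partEntropy_eq_integral hX]
  exact partEntropy_prodMk_le hX hY (R := fun _ s => M.real (X ⁻¹' {s}))
    (fun _ _ => measureReal_nonneg) (fun _ => (sum_measureReal_fiber hX).le)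
    (ae_measureReal_fiber_pos M X)

theorem partEntropy_pi_le {ι : Type*} [Fintype ι] [DecidableEq ι] {X : ι → Ω → α}
    (hX : ∀ i, Measurable (X i)) (hY : Measurable Y) {R : ι → β → α → ℝ}
    (hR0 : ∀ i t s, 0 < R i t s) (hR1 : ∀ i t, ∑ s, R i t s ≤ 1) :
    partEntropy M (fun ω i => X i ω) ≤
      partEntropy M Y + ∑ i, ∫ ω, -Real.log (R i (Y ω) (X i ω)) ∂M := by
  have hXY : Measurable fun ω i => X i ω := measurable_pi_lambda _ hX
  have hint (i : ι) : Integrable (fun ω => -Real.log (R i (Y ω) (X i ω))) M :=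
    integrable_comp_of_finite (hY.prodMk (hX i)) fun z => -Real.log (R i z.1 z.2)
  calc partEntropy M (fun ω i => X i ω)
      ≤ partEntropy M (fun ω => ((fun i => X i ω), Y ω)) :=
        partEntropy_comp_le (hXY.prodMk hY) Prod.fst
    _ ≤ partEntropy M Y + ∫ ω, -Real.log (∏ i, R i (Y ω) (X i ω)) ∂M := by
        refine partEntropy_prodMk_le hXY hY (R := fun t s => ∏ i, R i t (s i))
          (fun t s => Finset.prod_nonneg fun i _ => (hR0 _ _ _).le) (fun t => ?_)
          (.of_forall fun ω => Finset.prod_pos fun i _ => hR0 _ _ _)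
        rw [← Fintype.prod_sum]
        exact Finset.prod_le_one (fun _ _ => Finset.sum_nonneg fun _ _ => (hR0 _ _ _).le)
          fun _ _ => hR1 _ _
    _ = partEntropy M Y + ∑ i, ∫ ω, -Real.log (R i (Y ω) (X i ω)) ∂M := by
        simp only [Real.log_prod fun _ _ => (hR0 _ _ _).ne', ← Finset.sum_neg_distrib]
        rw [integral_finsetSum _ fun i _ => hint i]

theorem partEntropy_itinerary_le [Finite γ] [MeasurableSpace γ] [MeasurableSingletonClass γ]
    {T : Ω → Ω} (hT : MeasurePreserving T M M) {π : Ω → α} (hπ : Measurable π) {C : Ω → γ}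
    (hC : Measurable C) (hY : Measurable Y) {n : ℕ} {f : Fin n → β → γ}
    (hCY : ∀ (j : Fin n) ω, C (T^[j] ω) = f j (Y ω)) {R : γ → α → ℝ} (hR0 : ∀ c s, 0 < R c s)
    (hR1 : ∀ c, ∑ s, R c s ≤ 1) :
    partEntropy M (fun ω (j : Fin n) => π (T^[j] ω)) ≤
      partEntropy M Y + n * ∫ ω, -Real.log (R (C ω) (π ω)) ∂M := by
  have hloss (j : Fin n) : ∫ ω, -Real.log (R (f j (Y ω)) (π (T^[j] ω))) ∂M =
      ∫ ω, -Real.log (R (C ω) (π ω)) ∂M := by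
    have hmeas : Measurable fun ω => -Real.log (R (C ω) (π ω)) :=
      (measurable_of_finite fun z : γ × α => -Real.log (R z.1 z.2)).comp (hC.prodMk hπ)
    conv_rhs => rw [← (hT.iterate j).map_eq,
      integral_map (hT.iterate j).measurable.aemeasurable hmeas.aestronglyMeasurable]
    simp only [hCY]
  refine (partEntropy_pi_le (X := fun (j : Fin n) ω => π (T^[j] ω))
    (fun j => hπ.comp (hT.iterate j).measurable) hY (R := fun j t => R (f j t))
    (fun j t => hR0 _) (fun j t => hR1 _)).trans_eq ?_
  simp [hloss]

-- `R c s` is the probability assigned to `s` by an observer who sees `c`. Charging `-log R` to an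
-- approximation of `π` by `ψ` takes the place of Fano's inequality.
theorem exists_channel_neg_log_diag_le (α : Type*) [Fintype α] {ε : ℝ} (hε : 0 < ε) :
    ∃ R : α → α → ℝ, (∀ c s, 0 < R c s) ∧ (∀ c, ∑ s, R c s ≤ 1) ∧ ∀ c, -Real.log (R c c) ≤ ε := by
  classical
  have hq1 : 0 < 1 - Real.exp (-ε) := by simpa using hε
  have hcard (c : α) : 0 < (Fintype.card α : ℝ) := Nat.cast_pos.2 (Fintype.card_pos_iff.2 ⟨c⟩)
  refine ⟨fun c s => (1 - Real.exp (-ε)) / Fintype.card α + if s = c then Real.exp (-ε) else 0,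
    fun c s => ?_, fun c => ?_, fun c => ?_⟩
  · exact add_pos_of_pos_of_nonneg (div_pos hq1 (hcard c)) (by split_ifs <;> positivity)
  · simp [Finset.sum_add_distrib, mul_div_cancel₀ _ (hcard c).ne']
  · simp only [if_true]
    rw [neg_le, Real.le_log_iff_exp_le (add_pos (div_pos hq1 (hcard c)) (Real.exp_pos _))]
    exact le_add_of_nonneg_left (div_pos hq1 (hcard c)).le

theorem exists_integral_neg_log_channel_le [Finite γ] [MeasurableSpace γ]
    [MeasurableSingletonClass γ] (M : Measure Ω) [IsProbabilityMeasure M] {R : γ → γ → ℝ} {ε : ℝ}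
    (hR : ∀ c, -Real.log (R c c) ≤ ε) :
    ∃ B > 0, ∀ π ψ : Ω → γ, Measurable π → Measurable ψ →
      ∫ ω, -Real.log (R (ψ ω) (π ω)) ∂M ≤ ε + B * M.real {ω | π ω ≠ ψ ω} := by
  obtain ⟨B, hB⟩ := (Set.finite_range fun z : γ × γ => -Real.log (R z.1 z.2)).bddAbove
  refine ⟨max (B - ε) 1, by positivity, fun π ψ hπ hψ => ?_⟩
  have hne : MeasurableSet {ω | π ω ≠ ψ ω} := (measurableSet_eq_fun hπ hψ).compl
  calc ∫ ω, -Real.log (R (ψ ω) (π ω)) ∂M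
      ≤ ∫ ω, (ε + {ω | π ω ≠ ψ ω}.indicator (fun _ => max (B - ε) 1) ω) ∂M := by
        refine integral_mono (integrable_comp_of_finite (hψ.prodMk hπ)
          fun z => -Real.log (R z.1 z.2)) ((integrable_const _).add
          ((integrable_const _).indicator hne)) fun ω => ?_
        by_cases h : π ω = ψ ω
        · simpa [h] using hR (ψ ω)
        · have : -Real.log (R (ψ ω) (π ω)) ≤ B := hB ⟨(ψ ω, π ω), rfl⟩
          simp only [Set.indicator_of_mem (show ω ∈ {ω | π ω ≠ ψ ω} from h)]
          linarith [le_max_left (B - ε) 1]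
    _ = ε + max (B - ε) 1 * M.real {ω | π ω ≠ ψ ω} := by
        rw [integral_add (integrable_const _) ((integrable_const _).indicator hne),
          integral_indicator_const _ hne]
        simp [mul_comm]

end FinitePartitions

section FullShift

variable {E : Type*}

/-- The word of length `n` read off from position `m`. -/
def window (m : ℤ) (n : ℕ) (σ : ℤ → E) : Fin n → E := fun j => σ (m + (j : ℕ))

/-- The word of length `2 n + 1` around the origin. -/
def centralWindow (n : ℕ) : (ℤ → E) → Fin (2 * n + 1) → E := window (-(n : ℤ)) (2 * n + 1)

theorem shift_iterate_apply (n : ℕ) (σ : ℤ → E) (k : ℤ) : shift^[n] σ k = σ (k + n) := by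
  induction n generalizing σ with
  | zero => simp
  | succ n ih =>
    rw [Function.iterate_succ_apply, ih, shift]
    congr 1
    push_cast
    ring

theorem window_shift_iterate (m : ℤ) (n k : ℕ) (σ : ℤ → E) :
    window m n (shift^[k] σ) = window (m + k) n σ := by
  funext j
  simp only [window, shift_iterate_apply]
  congr 1
  ring

theorem window_subword {m : ℤ} {n j l : ℕ} (h : j + l ≤ n) (σ : ℤ → E) :
    (fun i : Fin l => window m n σ ⟨j + i, by omega⟩) = window (m + j) l σ := by
  funext i
  simp only [window]
  congr 1
  push_cast
  ring

theorem append_window_window (m : ℤ) (k l : ℕ) (σ : ℤ → E) :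
    Fin.append (window m k σ) (window (m + k) l σ) = window m (k + l) σ := by
  funext i
  refine Fin.addCases (fun i => ?_) (fun i => ?_) i
  · simp [window]
  · simp [window, add_assoc]

/-- The sets determined by a central window. -/
def centralSets (E : Type*) : Set (Set (ℤ → E)) :=
  {B | ∃ (n : ℕ) (T : Set (Fin (2 * n + 1) → E)), B = centralWindow n ⁻¹' T}

theorem exists_centralWindow_preimage_eq {n n' : ℕ} (h : n ≤ n')
    (T : Set (Fin (2 * n + 1) → E)) :
    ∃ T' : Set (Fin (2 * n' + 1) → E),
      (centralWindow n ⁻¹' T : Set (ℤ → E)) = centralWindow n' ⁻¹' T' := by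
  refine ⟨(fun u (i : Fin (2 * n + 1)) => u ⟨(n' - n) + i, by omega⟩) ⁻¹' T, ?_⟩
  rw [← Set.preimage_comp]
  congr 1
  funext σ
  rw [Function.comp_apply, centralWindow, centralWindow, window_subword (by omega)]
  congr 1
  omega

theorem isSetAlgebra_centralSets (E : Type*) : IsSetAlgebra (centralSets E) where
  empty_mem := ⟨0, ∅, by rw [Set.preimage_empty]⟩
  compl_mem := by
    rintro _ ⟨n, T, rfl⟩
    exact ⟨n, Tᶜ, rfl⟩
  union_mem := by
    rintro _ _ ⟨n, T, rfl⟩ ⟨m, T', rfl⟩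
    obtain ⟨S, hS⟩ := exists_centralWindow_preimage_eq (le_max_left n m) T
    obtain ⟨S', hS'⟩ := exists_centralWindow_preimage_eq (le_max_right n m) T'
    exact ⟨max n m, S ∪ S', by rw [hS, hS', Set.preimage_union]⟩

theorem exists_ne_comp_subset_iUnion_symmDiff {Ω α β : Type*} [Nonempty α] (π : Ω → α)
    (Y : Ω → β) (T : α → Set β) :
    ∃ φ : β → α, {ω | π ω ≠ φ (Y ω)} ⊆ ⋃ s, symmDiff (π ⁻¹' {s}) (Y ⁻¹' T s) := by
  classical
  refine ⟨fun t => if h : ∃ s, t ∈ T s then h.choose else Classical.arbitrary α, fun ω hω => ?_⟩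
  by_contra hn
  simp only [Set.mem_iUnion, not_exists, Set.mem_symmDiff, Set.mem_preimage,
    Set.mem_singleton_iff, not_or, not_and, not_not] at hn
  have hex : ∃ s, Y ω ∈ T s := ⟨π ω, (hn (π ω)).1 rfl⟩
  refine hω ?_
  simp only [hex, dif_pos]
  exact (hn _).2 hex.choose_spec

variable [MeasurableSpace E]

theorem measurable_window (m : ℤ) (n : ℕ) : Measurable (window m n : (ℤ → E) → Fin n → E) :=
  measurable_pi_lambda _ fun j => measurable_pi_apply (m + (j : ℕ))

theorem measurable_shift : Measurable (shift : (ℤ → E) → (ℤ → E)) :=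
  measurable_pi_lambda _ fun k => measurable_pi_apply (k + 1)

theorem measurable_centralWindow (n : ℕ) :
    Measurable (centralWindow n : (ℤ → E) → Fin (2 * n + 1) → E) :=
  measurable_window _ _

theorem generateFrom_centralSets (E : Type*) [Finite E] [MeasurableSpace E]
    [MeasurableSingletonClass E] :
    (MeasurableSpace.pi : MeasurableSpace (ℤ → E)) =
      MeasurableSpace.generateFrom (centralSets E) := by
  apply le_antisymm
  · refine iSup_le fun k => ?_
    rintro _ ⟨A, -, rfl⟩
    refine MeasurableSpace.measurableSet_generateFrom
      ⟨k.natAbs, {u | u ⟨(k + k.natAbs).toNat, by omega⟩ ∈ A}, ?_⟩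
    ext σ
    simp only [Set.mem_preimage, centralWindow, window, Set.mem_ofPred_eq]
    rw [show -(k.natAbs : ℤ) + ((k + k.natAbs).toNat : ℤ) = k by omega]
  · refine MeasurableSpace.generateFrom_le ?_
    rintro _ ⟨n, T, rfl⟩
    exact measurable_centralWindow n T.toFinite.measurableSet

theorem ext_of_map_centralWindow [Finite E] [MeasurableSingletonClass E]
    {M M' : Measure (ℤ → E)} [IsFiniteMeasure M]
    (h : ∀ n, M.map (centralWindow n) = M'.map (centralWindow n)) : M = M' := by
  have hcyl (n : ℕ) (T : Set (Fin (2 * n + 1) → E)) :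
      M (centralWindow n ⁻¹' T) = M' (centralWindow n ⁻¹' T) := by
    rw [← Measure.map_apply (measurable_centralWindow n) T.toFinite.measurableSet, h,
      Measure.map_apply (measurable_centralWindow n) T.toFinite.measurableSet]
  refine ext_of_generate_finite _ (generateFrom_centralSets E)
    (fun s hs t ht _ => (isSetAlgebra_centralSets E).inter_mem hs ht) ?_ (hcyl 0 Set.univ)
  rintro _ ⟨n, T, rfl⟩
  exact hcyl n T

theorem exists_measureReal_ne_centralWindow_le [Finite E] [MeasurableSingletonClass E]
    (M : Measure (ℤ → E)) [IsProbabilityMeasure M] {α : Type*} [Finite α] [MeasurableSpace α]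
    [MeasurableSingletonClass α] {π : (ℤ → E) → α} (hπ : Measurable π) {ε : ℝ} (hε : 0 < ε) :
    ∃ (n : ℕ) (φ : (Fin (2 * n + 1) → E) → α), M.real {σ | π σ ≠ φ (centralWindow n σ)} ≤ ε := by
  have := Fintype.ofFinite α
  have : Nonempty α := (nonempty_of_isProbabilityMeasure M).map π
  have hdense := Measure.MeasureDense.of_generateFrom_isSetAlgebra_finite (μ := M)
    (isSetAlgebra_centralSets E) (generateFrom_centralSets E)
  have hεα : 0 < ε / Fintype.card α := by positivity
  choose B hB hBm using fun s =>
    hdense.approx (π ⁻¹' {s}) (hπ (measurableSet_singleton s)) (measure_ne_top _ _) _ hεα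
  choose m T hT using hB
  have hle (s : α) : m s ≤ ∑ s, m s :=
    Finset.single_le_sum (fun _ _ => Nat.zero_le _) (Finset.mem_univ s)
  choose T' hT' using fun s => exists_centralWindow_preimage_eq (hle s) (T s)
  obtain ⟨φ, hφ⟩ := exists_ne_comp_subset_iUnion_symmDiff π (centralWindow (∑ s, m s)) T'
  refine ⟨∑ s, m s, φ, ?_⟩
  calc M.real {σ | π σ ≠ φ (centralWindow (∑ s, m s) σ)}
      ≤ M.real (⋃ s, symmDiff (π ⁻¹' {s}) (centralWindow (∑ s, m s) ⁻¹' T' s)) :=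
        measureReal_mono hφ
    _ ≤ ∑ s, M.real (symmDiff (π ⁻¹' {s}) (centralWindow (∑ s, m s) ⁻¹' T' s)) :=
        measureReal_iUnion_fintype_le _
    _ ≤ ∑ _s : α, ε / Fintype.card α := Finset.sum_le_sum fun s _ => by
        rw [← hT', ← hT]
        exact ENNReal.toReal_le_of_le_ofReal hεα.le (hBm s).le
    _ = ε := by simp [mul_div_cancel₀]

/-- The entropy of the words of length `n` under a measure on `E^ℤ`. -/
noncomputable def blockEntropy [Fintype E] (M : Measure (ℤ → E)) (n : ℕ) : ℝ :=
  partEntropy M (window 0 n)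

variable [Fintype E] {M : Measure (ℤ → E)}

theorem bddBelow_range_blockEntropy_div (M : Measure (ℤ → E)) [IsProbabilityMeasure M] :
    BddBelow (Set.range fun n : ℕ => blockEntropy M n / n) := by
  refine ⟨0, ?_⟩
  rintro _ ⟨n, rfl⟩
  exact div_nonneg (partEntropy_nonneg _) n.cast_nonneg

variable [MeasurableSingletonClass E]

theorem partEntropy_window (hM : MeasurePreserving shift M M) (m : ℤ) (n : ℕ) :
    partEntropy M (window m n) = blockEntropy M n := by
  obtain ⟨k, rfl | rfl⟩ := m.eq_nat_or_neg
  · rw [blockEntropy, ← partEntropy_comp_measurePreserving (hM.iterate k) (measurable_window 0 n)]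
    simp only [window_shift_iterate, zero_add]
  · rw [blockEntropy, ← partEntropy_comp_measurePreserving (hM.iterate k)
      (measurable_window (-(k : ℤ)) n)]
    simp only [window_shift_iterate, neg_add_cancel]

variable [IsProbabilityMeasure M]

theorem subadditive_blockEntropy (hM : MeasurePreserving shift M M) :
    Subadditive (blockEntropy M) := fun k l => by
  calc blockEntropy M (k + l)
      = partEntropy M (fun σ => Fin.append (window 0 k σ) (window (0 + k) l σ)) := by
        simp only [append_window_window]
        rfl
    _ ≤ partEntropy M (fun σ => (window 0 k σ, window (0 + k) l σ)) :=
        partEntropy_comp_le ((measurable_window _ _).prodMk (measurable_window _ _))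
          fun z => Fin.append z.1 z.2
    _ ≤ partEntropy M (window 0 k) + partEntropy M (window (0 + k) l) :=
        partEntropy_prodMk_le_add (measurable_window _ _) (measurable_window _ _)
    _ = blockEntropy M k + blockEntropy M l := by rw [partEntropy_window hM, partEntropy_window hM]

theorem exists_partEntropy_itinerary_le_blockEntropy (hM : MeasurePreserving shift M M)
    {α : Type*} [Fintype α] [MeasurableSpace α] [MeasurableSingletonClass α]
    {π : (ℤ → E) → α} (hπ : Measurable π) {ε : ℝ} (hε : 0 < ε) :
    ∃ m : ℕ, ∀ n : ℕ, partEntropy M (fun σ (j : Fin n) => π (shift^[j] σ)) ≤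
      blockEntropy M (n + 2 * m) + n * ε := by
  obtain ⟨R, hR0, hR1, hRdiag⟩ := exists_channel_neg_log_diag_le α (half_pos hε)
  obtain ⟨B, hB, hloss⟩ := exists_integral_neg_log_channel_le M hRdiag
  obtain ⟨m, φ, hφ⟩ :=
    exists_measureReal_ne_centralWindow_le M hπ (ε := ε / (2 * B)) (by positivity)
  refine ⟨m, fun n => ?_⟩
  have hφm : Measurable fun σ => φ (centralWindow m σ) :=
    (measurable_of_finite φ).comp (measurable_centralWindow m)
  have hcode (j : Fin n) (σ : ℤ → E) : φ (centralWindow m (shift^[j] σ)) =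
      φ fun i => window (-(m : ℤ)) (n + 2 * m) σ ⟨j + i, by omega⟩ := by
    rw [centralWindow, window_shift_iterate, window_subword (by omega)]
  calc partEntropy M (fun σ (j : Fin n) => π (shift^[j] σ))
      ≤ partEntropy M (window (-(m : ℤ)) (n + 2 * m)) +
          n * ∫ σ, -Real.log (R (φ (centralWindow m σ)) (π σ)) ∂M :=
        partEntropy_itinerary_le hM hπ hφm (measurable_window _ _)
          (f := fun j u => φ fun i => u ⟨j + i, by omega⟩) hcode hR0 hR1
    _ ≤ blockEntropy M (n + 2 * m) + n * (ε / 2 + B * (ε / (2 * B))) := by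
        rw [partEntropy_window hM]
        gcongr
        exact (hloss π _ hπ hφm).trans (by gcongr)
    _ = blockEntropy M (n + 2 * m) + n * ε := by
        field_simp
        ring

theorem ksEntropy_shift_le (hM : MeasurePreserving shift M M) :
    ksEntropy M shift ≤ ENNReal.ofReal (subadditive_blockEntropy hM).lim := by
  refine iSup_le fun k => iSup_le fun π => iSup_le fun hπ => ?_
  refine ENNReal.le_of_forall_pos_le_add fun ε hε _ => ?_
  obtain ⟨m, hm⟩ := exists_partEntropy_itinerary_le_blockEntropy hM
    (measurable_to_countable' hπ) (NNReal.coe_pos.2 hε)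
  set h := (subadditive_blockEntropy hM).lim
  have hrate (n : ℕ) : ((n : ℝ) + 1)⁻¹ *
      partEntropy M (fun σ (j : Fin (n + 1)) => π (shift^[j] σ)) ≤
        blockEntropy M (n + 1) / (n + 1 : ℕ) + blockEntropy M (2 * m) / (n + 1 : ℕ) + ε := by
    refine (inv_mul_le_iff₀ (by positivity)).2 ((hm (n + 1)).trans ?_)
    have := subadditive_blockEntropy hM (n + 1) (2 * m)
    push_cast
    field_simp
    linarith
  have hlim : Tendsto (fun n : ℕ => blockEntropy M (n + 1) / (n + 1 : ℕ) +
      blockEntropy M (2 * m) / (n + 1 : ℕ) + ε) atTop (nhds (h + 0 + ε)) :=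
    (((subadditive_blockEntropy hM).tendsto_lim (bddBelow_range_blockEntropy_div M)).add
      (tendsto_const_div_atTop_nhds_zero_nat _)).comp (tendsto_add_atTop_nat 1) |>.add_const _
  calc _ ≤ ENNReal.ofReal (h + 0 + ε) :=
        ge_of_tendsto' (ENNReal.tendsto_ofReal hlim) fun n =>
          (iInf_le _ n).trans (ENNReal.ofReal_le_ofReal (hrate n))
    _ ≤ ENNReal.ofReal h + ε := by
        rw [add_zero]
        exact ENNReal.ofReal_add_le.trans_eq (by rw [ENNReal.ofReal_coe_nnreal])

theorem le_ksEntropy_shift (hM : MeasurePreserving shift M M) :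
    ENNReal.ofReal (subadditive_blockEntropy hM).lim ≤ ksEntropy M shift := by
  let c := Fintype.equivFin E
  let π : (ℤ → E) → Fin (Fintype.card E) := fun σ => c (σ 0)
  have hπ : Measurable π := (measurable_of_finite c).comp (measurable_pi_apply 0)
  refine le_iSup_of_le _ (le_iSup_of_le π (le_iSup_of_le
    (fun j => hπ (measurableSet_singleton j)) (le_iInf fun n => ENNReal.ofReal_le_ofReal ?_)))
  have hitin : Measurable fun σ (j : Fin (n + 1)) => π (shift^[j] σ) :=
    measurable_pi_lambda _ fun j => hπ.comp (hM.iterate j).measurable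
  calc (subadditive_blockEntropy hM).lim ≤ blockEntropy M (n + 1) / (n + 1 : ℕ) :=
        Subadditive.lim_le_div _ (bddBelow_range_blockEntropy_div M) n.succ_ne_zero
    _ = ((n : ℝ) + 1)⁻¹ * partEntropy M (fun σ (j : Fin (n + 1)) =>
          c.symm (π (shift^[j] σ))) := by
        rw [div_eq_inv_mul, Nat.cast_succ]
        simp only [π, c.symm_apply_apply, shift_iterate_apply]
        rfl
    _ ≤ ((n : ℝ) + 1)⁻¹ * partEntropy M (fun σ (j : Fin (n + 1)) => π (shift^[j] σ)) := by
        gcongr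
        exact partEntropy_comp_le hitin fun v j => c.symm (v j)

/-- The Kolmogorov–Sinai theorem for the generating partition of the full shift into letters. -/
theorem ksEntropy_shift (hM : MeasurePreserving shift M M) :
    ksEntropy M shift = ENNReal.ofReal (subadditive_blockEntropy hM).lim :=
  le_antisymm (ksEntropy_shift_le hM) (le_ksEntropy_shift hM)

end FullShift

section FiniteSums

variable {ι : Type*} [Fintype ι]

theorem sum_fin_succ_arrow {A : Type*} [AddCommMonoid A] {n : ℕ} (f : (Fin (n + 1) → ι) → A) :
    ∑ u, f u = ∑ i, ∑ u : Fin n → ι, f (Fin.cons i u) := by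
  rw [← (Fin.consEquiv fun _ => ι).sum_comp, Fintype.sum_prod_type]
  rfl

theorem sum_mul_le_sum_mul_of_pos {w f g : ι → ℝ} (hw : ∀ i, 0 ≤ w i)
    (h : ∀ i, 0 < w i → f i ≤ g i) : ∑ i, w i * f i ≤ ∑ i, w i * g i := by
  refine Finset.sum_le_sum fun i _ => ?_
  rcases (hw i).eq_or_lt with h0 | h0
  · rw [← h0, zero_mul, zero_mul]
  · exact mul_le_mul_of_nonneg_left (h i h0) h0.le

theorem abs_sum_mul_le_sum_mul_of_pos {w f g : ι → ℝ} (hw : ∀ i, 0 ≤ w i)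
    (h : ∀ i, 0 < w i → |f i| ≤ g i) : |∑ i, w i * f i| ≤ ∑ i, w i * g i :=
  (Finset.abs_sum_le_sum_abs _ _).trans <| by
    simpa only [abs_mul, abs_of_nonneg (hw _)] using sum_mul_le_sum_mul_of_pos hw h

theorem abs_negMulLog_le_one {t : ℝ} (h0 : 0 ≤ t) (h1 : t ≤ 1) : |Real.negMulLog t| ≤ 1 := by
  rw [abs_of_nonneg (Real.negMulLog_nonneg h0 h1)]
  linarith [Real.negMulLog_le_one_sub_self h0]

theorem abs_sum_negMulLog_le_card {p : ι → ℝ} (h0 : ∀ i, 0 ≤ p i) (h1 : ∀ i, p i ≤ 1) :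
    |∑ i, Real.negMulLog (p i)| ≤ Fintype.card ι :=
  calc |∑ i, Real.negMulLog (p i)| ≤ ∑ i, |Real.negMulLog (p i)| := Finset.abs_sum_le_sum_abs _ _
    _ ≤ ∑ _i : ι, 1 := Finset.sum_le_sum fun i _ => abs_negMulLog_le_one (h0 i) (h1 i)
    _ = Fintype.card ι := by simp

end FiniteSums

theorem integrable_negMulLog_comp {X : Type*} [MeasurableSpace X] {μ : Measure X}
    [IsFiniteMeasure μ] {f : X → ℝ} (hf : Measurable f) (h0 : ∀ x, 0 ≤ f x) (h1 : ∀ x, f x ≤ 1) :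
    Integrable (fun x => Real.negMulLog (f x)) μ :=
  .of_bound (Real.continuous_negMulLog.measurable.comp hf).aestronglyMeasurable 1
    (.of_forall fun x => abs_negMulLog_le_one (h0 x) (h1 x))

theorem exists_dist_le_add_mul_dist_of_uniformContinuousOn {X Y : Type*} [PseudoMetricSpace X]
    [PseudoMetricSpace Y] {f : X → Y} {s : Set X} (hf : UniformContinuousOn f s)
    (hbdd : Bornology.IsBounded (f '' s)) {ε : ℝ} (hε : 0 < ε) :
    ∃ C ≥ 0, ∀ x ∈ s, ∀ y ∈ s, dist (f x) (f y) ≤ ε + C * dist x y := by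
  obtain ⟨η, hη, hclose⟩ := Metric.uniformContinuousOn_iff.1 hf ε hε
  refine ⟨Metric.diam (f '' s) / η, by positivity, fun x hx y hy => ?_⟩
  rcases lt_or_ge (dist x y) η with hxy | hxy
  · exact (hclose x hx y hy hxy).le.trans (le_add_of_nonneg_right (by positivity))
  · calc dist (f x) (f y) ≤ Metric.diam (f '' s) :=
          Metric.dist_le_diam_of_mem hbdd (Set.mem_image_of_mem f hx) (Set.mem_image_of_mem f hy)
      _ = Metric.diam (f '' s) / η * η := by field_simp
      _ ≤ Metric.diam (f '' s) / η * dist x y := by gcongr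
      _ ≤ ε + Metric.diam (f '' s) / η * dist x y := le_add_of_nonneg_left hε.le

namespace MarkovSystem

variable {K : Type*} [MetricSpace K] [MeasurableSpace K] {N : ℕ} {E : Type*} [Fintype E]

section Words

variable (sys : MarkovSystem K N E) {n : ℕ}

/-- The probability of the word `u` when starting from `x`. -/
def cylProb (u : Fin n → E) (x : K) : ℝ := wordProb sys.w sys.p (List.ofFn u) x

/-- The composition of the maps along the word `u`. -/
def cylMap (u : Fin n → E) (x : K) : K := wordMap sys.w (List.ofFn u) x

/-- The Markov operator `U`. -/
def markovOp (f : K → ℝ) (x : K) : ℝ := ∑ e, sys.p e x * f (sys.w e x)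

/-- The entropy of the probability vector `(p_e(x))_e`. -/
noncomputable def localEntropy (x : K) : ℝ := ∑ e, Real.negMulLog (sys.p e x)

/-- The entropy of the distribution of the words of length `n` when starting from `x`. -/
noncomputable def wordEntropy (n : ℕ) (x : K) : ℝ :=
  ∑ u : Fin n → E, Real.negMulLog (sys.cylProb u x)

/-- The relative entropy (Kullback–Leibler divergence) of the distributions of the words of
length `n` when starting from `x` and from `y`. It is meaningful for `x` and `y` in the same
`K_v`; elsewhere `Real.log 0 = 0` replaces the value `∞`. -/
noncomputable def relEntropy (n : ℕ) (x y : K) : ℝ :=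
  ∑ u : Fin n → E, sys.cylProb u x * (Real.log (sys.cylProb u x) - Real.log (sys.cylProb u y))

end Words

variable {sys : MarkovSystem K N E} {n : ℕ} {x y : K} {v : Fin N} {a : ℝ}

@[simp] theorem cylProb_zero (u : Fin 0 → E) (x : K) : sys.cylProb u x = 1 := rfl

@[simp] theorem cylProb_cons (e : E) (u : Fin n → E) (x : K) :
    sys.cylProb (Fin.cons e u : Fin (n + 1) → E) x = sys.p e x * sys.cylProb u (sys.w e x) := by
  simp [cylProb, List.ofFn_succ, wordProb]

@[simp] theorem cylMap_zero (u : Fin 0 → E) (x : K) : sys.cylMap u x = x := rfl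

@[simp] theorem cylMap_cons (e : E) (u : Fin n → E) (x : K) :
    sys.cylMap (Fin.cons e u : Fin (n + 1) → E) x = sys.cylMap u (sys.w e x) := by
  simp [cylMap, List.ofFn_succ, wordMap]

theorem p_le_one (e : E) (x : K) : sys.p e x ≤ 1 := by
  rw [← sys.p_sum_one x]
  exact Finset.single_le_sum (fun e _ => sys.p_nonneg e x) (Finset.mem_univ e)

theorem cylProb_nonneg (u : Fin n → E) (x : K) : 0 ≤ sys.cylProb u x := by
  induction u using Fin.consInduction generalizing x with
  | elim0 => exact zero_le_one
  | cons e u ih =>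
    rw [cylProb_cons]
    exact mul_nonneg (sys.p_nonneg _ _) (ih _)

theorem cylProb_le_one (u : Fin n → E) (x : K) : sys.cylProb u x ≤ 1 := by
  induction u using Fin.consInduction generalizing x with
  | elim0 => exact le_rfl
  | cons e u ih =>
    rw [cylProb_cons]
    exact mul_le_one₀ (p_le_one _ _) (cylProb_nonneg _ _) (ih _)

theorem sum_cylProb (n : ℕ) (x : K) : ∑ u : Fin n → E, sys.cylProb u x = 1 := by
  induction n generalizing x with
  | zero => simp
  | succ n ih => simp only [sum_fin_succ_arrow, cylProb_cons, ← Finset.mul_sum, ih, mul_one,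
      sys.p_sum_one]

theorem measurable_cylProb (u : Fin n → E) : Measurable (sys.cylProb u) := by
  induction u using Fin.consInduction with
  | elim0 => exact measurable_const
  | cons e u ih =>
    rw [funext (cylProb_cons e u)]
    exact (sys.p_measurable _).mul (ih.comp (sys.w_measurable _))

theorem integrable_cylProb (u : Fin n → E) (μ : Measure K) [IsFiniteMeasure μ] :
    Integrable (sys.cylProb u) μ :=
  .of_bound (measurable_cylProb u).aestronglyMeasurable 1 (.of_forall fun x =>
    (Real.norm_of_nonneg (cylProb_nonneg u x)).trans_le (cylProb_le_one u x))

theorem edgeI_eq_of_mem (hx : x ∈ sys.Ki v) {e : E} (h : x ∈ sys.Ki (sys.edgeI e)) :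
    sys.edgeI e = v := by
  by_contra hne
  exact Set.disjoint_left.1 (sys.Ki_disjoint _ _ hne) h hx

theorem edgeI_eq_of_p_pos (hx : x ∈ sys.Ki v) {e : E} (h : 0 < sys.p e x) : sys.edgeI e = v :=
  edgeI_eq_of_mem hx (not_imp_comm.1 (sys.p_eq_zero e x) h.ne')

theorem edgeI_eq_of_cylProb_pos (hx : x ∈ sys.Ki v) {u : Fin (n + 1) → E}
    (h : 0 < sys.cylProb u x) : sys.edgeI (u 0) = v := by
  rw [← Fin.cons_self_tail u, cylProb_cons] at h
  exact edgeI_eq_of_p_pos hx (pos_of_mul_pos_left h (cylProb_nonneg _ _))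

theorem cylProb_pos_of_mem (hpos : ∀ e, ∀ x ∈ sys.Ki (sys.edgeI e), 0 < sys.p e x)
    (hx : x ∈ sys.Ki v) (hy : y ∈ sys.Ki v) {u : Fin n → E} (h : 0 < sys.cylProb u x) :
    0 < sys.cylProb u y := by
  induction u using Fin.consInduction generalizing x y v with
  | elim0 => exact zero_lt_one
  | cons e u ih =>
    rw [cylProb_cons] at h ⊢
    have hp := pos_of_mul_pos_left h (cylProb_nonneg _ _)
    obtain rfl := edgeI_eq_of_p_pos hx hp
    exact mul_pos (hpos e y hy)
      (ih (sys.w_mapsTo e hx) (sys.w_mapsTo e hy) (pos_of_mul_pos_right h hp.le))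

theorem sum_cylProb_mul_dist_le (ha0 : 0 ≤ a) (hcontr : sys.ContractiveOnAvg a) (n : ℕ)
    (hx : x ∈ sys.Ki v) (hy : y ∈ sys.Ki v) :
    ∑ u : Fin n → E, sys.cylProb u x * dist (sys.cylMap u x) (sys.cylMap u y)
      ≤ a ^ n * dist x y := by
  induction n generalizing x y v with
  | zero => simp
  | succ n ih =>
    simp only [sum_fin_succ_arrow, cylProb_cons, cylMap_cons, mul_assoc, ← Finset.mul_sum]
    calc _ ≤ ∑ e, sys.p e x * (a ^ n * dist (sys.w e x) (sys.w e y)) := by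
          refine sum_mul_le_sum_mul_of_pos (fun e => sys.p_nonneg e x) fun e he => ?_
          obtain rfl := edgeI_eq_of_p_pos hx he
          exact ih (sys.w_mapsTo e hx) (sys.w_mapsTo e hy)
      _ = a ^ n * ∑ e, sys.p e x * dist (sys.w e x) (sys.w e y) := by
          rw [Finset.mul_sum]
          exact Finset.sum_congr rfl fun _ _ => mul_left_comm _ _ _
      _ ≤ a ^ n * (a * dist x y) := by gcongr; exact hcontr v x hx y hy
      _ = a ^ (n + 1) * dist x y := by ring

section MarkovOp

variable {f : K → ℝ} {B : ℝ}

theorem measurable_markovOp (hf : Measurable f) : Measurable (sys.markovOp f) :=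
  Finset.measurable_sum _ fun e _ => (sys.p_measurable e).mul (hf.comp (sys.w_measurable e))

theorem abs_markovOp_le (hB : ∀ x, |f x| ≤ B) (x : K) : |sys.markovOp f x| ≤ B :=
  (abs_sum_mul_le_sum_mul_of_pos (fun e => sys.p_nonneg e x) fun e _ => hB (sys.w e x)).trans_eq
    (by rw [← Finset.sum_mul, sys.p_sum_one, one_mul])

theorem measurable_markovOp_iterate (hf : Measurable f) (n : ℕ) :
    Measurable (sys.markovOp^[n] f) := by
  induction n with
  | zero => exact hf
  | succ n ih => exact Function.iterate_succ_apply' sys.markovOp n f ▸ measurable_markovOp ih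

theorem abs_markovOp_iterate_le (hB : ∀ x, |f x| ≤ B) (n : ℕ) (x : K) :
    |sys.markovOp^[n] f x| ≤ B := by
  induction n generalizing x with
  | zero => exact hB x
  | succ n ih => exact Function.iterate_succ_apply' sys.markovOp n f ▸ abs_markovOp_le ih x

theorem markovOp_iterate_apply (f : K → ℝ) (n : ℕ) (x : K) :
    sys.markovOp^[n] f x = ∑ u : Fin n → E, sys.cylProb u x * f (sys.cylMap u x) := by
  induction n generalizing x with
  | zero => simp
  | succ n ih => simp only [Function.iterate_succ_apply', markovOp, ih, sum_fin_succ_arrow,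
      cylProb_cons, cylMap_cons, mul_assoc, Finset.mul_sum]

theorem IsInvariant.integral_markovOp {μ : Measure K} (hμ : sys.IsInvariant μ) (hf : Measurable f)
    (hB : ∀ x, |f x| ≤ B) : ∫ x, sys.markovOp f x ∂μ = ∫ x, f x ∂μ :=
  hμ.2 f hf ⟨B, hB⟩

theorem IsInvariant.integral_markovOp_iterate {μ : Measure K} (hμ : sys.IsInvariant μ)
    (hf : Measurable f) (hB : ∀ x, |f x| ≤ B) (n : ℕ) :
    ∫ x, sys.markovOp^[n] f x ∂μ = ∫ x, f x ∂μ := by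
  induction n with
  | zero => rfl
  | succ n ih =>
    rw [Function.iterate_succ_apply', hμ.integral_markovOp (measurable_markovOp_iterate hf n)
      (abs_markovOp_iterate_le hB n), ih]

end MarkovOp

section Entropy

theorem measurable_wordEntropy (n : ℕ) : Measurable (sys.wordEntropy n) :=
  Finset.measurable_sum _ fun u _ =>
    Real.continuous_negMulLog.measurable.comp (measurable_cylProb u)

theorem wordEntropy_succ (n : ℕ) (x : K) :
    sys.wordEntropy (n + 1) x = sys.localEntropy x + sys.markovOp (sys.wordEntropy n) x := by
  simp only [wordEntropy, sum_fin_succ_arrow, cylProb_cons, Real.negMulLog_mul,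
    Finset.sum_add_distrib, ← Finset.mul_sum, ← Finset.sum_mul, sum_cylProb, localEntropy,
    markovOp, one_mul]

theorem abs_wordEntropy_le (n : ℕ) (x : K) :
    |sys.wordEntropy n x| ≤ Fintype.card (Fin n → E) :=
  abs_sum_negMulLog_le_card (fun u => cylProb_nonneg u x) fun u => cylProb_le_one u x

variable {μ : Measure K}

theorem integrable_negMulLog_p [IsFiniteMeasure μ] (e : E) :
    Integrable (fun x => Real.negMulLog (sys.p e x)) μ :=
  integrable_negMulLog_comp (sys.p_measurable e) (sys.p_nonneg e) (p_le_one e)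

theorem integrable_negMulLog_cylProb [IsFiniteMeasure μ] (u : Fin n → E) :
    Integrable (fun x => Real.negMulLog (sys.cylProb u x)) μ :=
  integrable_negMulLog_comp (measurable_cylProb u) (cylProb_nonneg u) (cylProb_le_one u)

theorem integrable_localEntropy [IsFiniteMeasure μ] : Integrable sys.localEntropy μ :=
  integrable_finsetSum _ fun e _ => integrable_negMulLog_p e

theorem integrable_wordEntropy [IsFiniteMeasure μ] (n : ℕ) : Integrable (sys.wordEntropy n) μ :=
  integrable_finsetSum _ fun u _ => integrable_negMulLog_cylProb u

theorem IsInvariant.integral_wordEntropy (hμ : sys.IsInvariant μ) (n : ℕ) :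
    ∫ x, sys.wordEntropy n x ∂μ = n * ∫ x, sys.localEntropy x ∂μ := by
  have := hμ.1
  induction n with
  | zero => simp [wordEntropy]
  | succ n ih =>
    have hint : Integrable (sys.markovOp (sys.wordEntropy n)) μ :=
      .of_bound (measurable_markovOp (measurable_wordEntropy n)).aestronglyMeasurable _
        (.of_forall (abs_markovOp_le (abs_wordEntropy_le n)))
    simp only [wordEntropy_succ]
    rw [integral_add integrable_localEntropy hint,
      hμ.integral_markovOp (measurable_wordEntropy n) (abs_wordEntropy_le n), ih]
    push_cast
    ring

theorem neg_sum_setIntegral_eq [IsFiniteMeasure μ] :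
    -∑ e, ∫ x in sys.Ki (sys.edgeI e), sys.p e x * Real.log (sys.p e x) ∂μ =
      ∫ x, sys.localEntropy x ∂μ := by
  simp only [localEntropy]
  rw [integral_finsetSum _ fun e _ => integrable_negMulLog_p e, ← Finset.sum_neg_distrib]
  refine Finset.sum_congr rfl fun e _ => ?_
  rw [setIntegral_eq_integral_of_forall_compl_eq_zero fun x hx => by
    rw [sys.p_eq_zero e x hx, zero_mul], ← integral_neg]
  simp only [Real.negMulLog, neg_mul]

theorem relEntropy_succ (hpos : ∀ e, ∀ x ∈ sys.Ki (sys.edgeI e), 0 < sys.p e x) (n : ℕ)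
    (hx : x ∈ sys.Ki v) (hy : y ∈ sys.Ki v) :
    sys.relEntropy (n + 1) x y = ∑ e, sys.p e x *
      ((Real.log (sys.p e x) - Real.log (sys.p e y)) +
        sys.relEntropy n (sys.w e x) (sys.w e y)) := by
  rw [relEntropy, sum_fin_succ_arrow]
  refine Finset.sum_congr rfl fun e _ => ?_
  simp only [cylProb_cons, mul_assoc, ← Finset.mul_sum]
  rcases (sys.p_nonneg e x).eq_or_lt with h0 | h0
  · rw [← h0, zero_mul, zero_mul]
  obtain rfl := edgeI_eq_of_p_pos hx h0
  rw [← one_mul (Real.log (sys.p e x) - Real.log (sys.p e y)),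
    ← sum_cylProb (sys := sys) n (sys.w e x), relEntropy, Finset.sum_mul, ← Finset.sum_add_distrib]
  congr 1
  refine Finset.sum_congr rfl fun u _ => ?_
  rcases (cylProb_nonneg (sys := sys) u (sys.w e x)).eq_or_lt with h1 | h1
  · simp only [← h1, zero_mul, add_zero]
  · have h2 := cylProb_pos_of_mem hpos (sys.w_mapsTo e hx) (sys.w_mapsTo e hy) h1
    rw [Real.log_mul h0.ne' h1.ne', Real.log_mul (hpos e y hy).ne' h2.ne']
    ring

theorem relEntropy_le (ha1 : a < 1) (hcontr : sys.ContractiveOnAvg a)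
    (hpos : ∀ e, ∀ x ∈ sys.Ki (sys.edgeI e), 0 < sys.p e x) {ε D : ℝ} (hD : 0 ≤ D)
    (hlog : ∀ e, ∀ x ∈ sys.Ki (sys.edgeI e), ∀ y ∈ sys.Ki (sys.edgeI e),
      Real.log (sys.p e x) - Real.log (sys.p e y) ≤ ε + D * dist x y)
    (n : ℕ) (hx : x ∈ sys.Ki v) (hy : y ∈ sys.Ki v) :
    sys.relEntropy n x y ≤ n * ε + D / (1 - a) * dist x y := by
  have ha : 0 < 1 - a := sub_pos.2 ha1
  induction n generalizing x y v with
  | zero =>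
    simp only [relEntropy, cylProb_zero, sub_self, mul_zero, Finset.sum_const_zero, Nat.cast_zero,
      zero_mul, zero_add]
    positivity
  | succ n ih =>
    rw [relEntropy_succ hpos n hx hy]
    calc _ ≤ ∑ e, sys.p e x * ((ε + D * dist x y) +
          (n * ε + D / (1 - a) * dist (sys.w e x) (sys.w e y))) := by
          refine sum_mul_le_sum_mul_of_pos (fun e => sys.p_nonneg e x) fun e he => ?_
          obtain rfl := edgeI_eq_of_p_pos hx he
          exact add_le_add (hlog e x hx y hy) (ih (sys.w_mapsTo e hx) (sys.w_mapsTo e hy))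
      _ = (ε + D * dist x y + n * ε) * ∑ e, sys.p e x +
            D / (1 - a) * ∑ e, sys.p e x * dist (sys.w e x) (sys.w e y) := by
          rw [Finset.mul_sum, Finset.mul_sum, ← Finset.sum_add_distrib]
          exact Finset.sum_congr rfl fun _ _ => by ring
      _ ≤ (ε + D * dist x y + n * ε) * 1 + D / (1 - a) * (a * dist x y) := by
          rw [sys.p_sum_one]
          gcongr
          exact hcontr v x hx y hy
      _ = (n + 1 : ℕ) * ε + D / (1 - a) * dist x y := by
          push_cast
          field_simp
          ring

theorem exists_log_p_sub_log_p_le {δ : ℝ} (hδ0 : 0 < δ)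
    (hδ : ∀ e, ∀ x ∈ sys.Ki (sys.edgeI e), δ ≤ sys.p e x)
    (hp : ∀ e, UniformContinuousOn (sys.p e) (sys.Ki (sys.edgeI e))) {ε : ℝ} (hε : 0 < ε) :
    ∃ D ≥ 0, ∀ e, ∀ x ∈ sys.Ki (sys.edgeI e), ∀ y ∈ sys.Ki (sys.edgeI e),
      Real.log (sys.p e x) - Real.log (sys.p e y) ≤ ε + D * dist x y := by
  have hmaps (e : E) : Set.MapsTo (sys.p e) (sys.Ki (sys.edgeI e)) (Set.Icc δ 1) :=
    fun x hx => ⟨hδ e x hx, p_le_one e x⟩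
  have hlogc : ContinuousOn Real.log (Set.Icc δ 1) :=
    Real.continuousOn_log.mono fun t ht => (hδ0.trans_le ht.1).ne'
  have hbdd (e : E) : Bornology.IsBounded
      ((Real.log ∘ sys.p e) '' sys.Ki (sys.edgeI e)) :=
    (isCompact_Icc.image_of_continuousOn hlogc).isBounded.subset
      (Set.image_comp .. ▸ Set.image_mono (hmaps e).image_subset)
  choose C hC hosc using fun e => exists_dist_le_add_mul_dist_of_uniformContinuousOn
    ((isCompact_Icc.uniformContinuousOn_of_continuous hlogc).comp (hp e) (hmaps e)) (hbdd e) hε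
  refine ⟨∑ e, C e, Finset.sum_nonneg fun e _ => hC e, fun e x hx y hy => ?_⟩
  calc Real.log (sys.p e x) - Real.log (sys.p e y)
      ≤ ε + C e * dist x y := (le_abs_self _).trans (hosc e x hx y hy)
    _ ≤ ε + (∑ e, C e) * dist x y := by
        gcongr
        exact Finset.single_le_sum (fun e _ => hC e) (Finset.mem_univ e)

end Entropy

section BasePoints

variable {xs : Fin N → K} {μ : Measure K}

/-- The distance of `x` to the base point `xs v` of the set `K_v` containing `x`. -/
noncomputable def baseDist (sys : MarkovSystem K N E) (xs : Fin N → K) (x : K) : ℝ :=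
  ∑ v, (sys.Ki v).indicator (fun y => dist y (xs v)) x

theorem baseDist_of_mem (xs : Fin N → K) (hx : x ∈ sys.Ki v) :
    sys.baseDist xs x = dist x (xs v) := by
  rw [baseDist, Finset.sum_eq_single_of_mem v (Finset.mem_univ v) fun v' _ hne =>
    Set.indicator_of_notMem (fun h => Set.disjoint_left.1 (sys.Ki_disjoint _ _ hne) h hx) _,
    Set.indicator_of_mem hx]

theorem integrable_baseDist [OpensMeasurableSpace K] [IsFiniteMeasure μ]
    (hfin : ∑ v, ∫⁻ x in sys.Ki v, ENNReal.ofReal (dist x (xs v)) ∂μ < ⊤) (ys : Fin N → K) :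
    Integrable (sys.baseDist ys) μ := by
  refine integrable_finsetSum _ fun v _ =>
    IntegrableOn.integrable_indicator ?_ (sys.Ki_measurable v)
  have hmeas (z : K) : Measurable fun y => dist y z :=
    (continuous_id.dist continuous_const).measurable
  have hxs : IntegrableOn (fun y => dist y (xs v)) (sys.Ki v) μ :=
    ⟨(hmeas _).aestronglyMeasurable, (hasFiniteIntegral_iff_ofReal
      (.of_forall fun _ => dist_nonneg)).2 (ENNReal.sum_lt_top.1 hfin v (Finset.mem_univ v))⟩
  exact (hxs.add (integrable_const (dist (xs v) (ys v)))).mono' (hmeas _).aestronglyMeasurable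
    (.of_forall fun y => (Real.norm_of_nonneg dist_nonneg).trans_le (dist_triangle _ _ _))

/-- The sum over the base points of the probabilities of the word `u`. As a measure on words, of
total mass `N`, it is the reference in Gibbs' inequality for the upper bound on block entropies. -/
def basePointProb (sys : MarkovSystem K N E) (xs : Fin N → K) (u : Fin n → E) : ℝ :=
  ∑ v, sys.cylProb u (xs v)

theorem sum_basePointProb (sys : MarkovSystem K N E) (xs : Fin N → K) (n : ℕ) :
    ∑ u : Fin n → E, sys.basePointProb xs u = N := by
  simp only [basePointProb]
  rw [Finset.sum_comm]
  simp only [sum_cylProb, Finset.sum_const, Finset.card_univ, Fintype.card_fin, nsmul_one]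

theorem cylProb_le_basePointProb (xs : Fin N → K) (u : Fin n → E) (v : Fin N) :
    sys.cylProb u (xs v) ≤ sys.basePointProb xs u :=
  Finset.single_le_sum (f := fun v => sys.cylProb u (xs v)) (fun v _ => cylProb_nonneg u (xs v))
    (Finset.mem_univ v)

theorem basePointProb_pos (hpos : ∀ e, ∀ x ∈ sys.Ki (sys.edgeI e), 0 < sys.p e x)
    (hxs : ∀ v, xs v ∈ sys.Ki v) {u : Fin n → E} (h : 0 < sys.cylProb u x) :
    0 < sys.basePointProb xs u := by
  obtain ⟨v, hx⟩ := sys.Ki_cover x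
  exact (cylProb_pos_of_mem hpos hx (hxs v) h).trans_le (cylProb_le_basePointProb xs u v)

theorem sum_cylProb_mul_neg_log_basePointProb_le
    (hpos : ∀ e, ∀ x ∈ sys.Ki (sys.edgeI e), 0 < sys.p e x) (hx : x ∈ sys.Ki v)
    (hxs : xs v ∈ sys.Ki v) (n : ℕ) :
    ∑ u : Fin n → E, sys.cylProb u x * -Real.log (sys.basePointProb xs u) ≤
      sys.wordEntropy n x + sys.relEntropy n x (xs v) :=
  calc _ ≤ ∑ u : Fin n → E, sys.cylProb u x * -Real.log (sys.cylProb u (xs v)) :=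
        sum_mul_le_sum_mul_of_pos (fun u => cylProb_nonneg u x) fun u hu =>
          neg_le_neg <| Real.log_le_log (cylProb_pos_of_mem hpos hx hxs hu)
            (cylProb_le_basePointProb xs u v)
    _ = sys.wordEntropy n x + sys.relEntropy n x (xs v) := by
        rw [wordEntropy, relEntropy, ← Finset.sum_add_distrib]
        exact Finset.sum_congr rfl fun u _ => by rw [Real.negMulLog]; ring

theorem sum_integral_cylProb_mul [IsFiniteMeasure μ] (G : (Fin n → E) → ℝ) :
    ∑ u, (∫ x, sys.cylProb u x ∂μ) * G u = ∫ x, ∑ u, sys.cylProb u x * G u ∂μ := by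
  rw [integral_finsetSum _ fun u _ => (integrable_cylProb u μ).mul_const _]
  simp only [integral_mul_const]

theorem sum_integral_cylProb [IsProbabilityMeasure μ] (n : ℕ) :
    ∑ u : Fin n → E, ∫ x, sys.cylProb u x ∂μ = 1 := by
  simpa [sum_cylProb] using sum_integral_cylProb_mul (sys := sys) (μ := μ) (n := n) 1

theorem integral_wordEntropy_le [IsProbabilityMeasure μ] (n : ℕ) :
    ∫ x, sys.wordEntropy n x ∂μ ≤ ∑ u : Fin n → E, Real.negMulLog (∫ x, sys.cylProb u x ∂μ) := by
  simp only [wordEntropy]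
  rw [integral_finsetSum _ fun u _ => integrable_negMulLog_cylProb u]
  exact Finset.sum_le_sum fun u _ => Real.concaveOn_negMulLog.le_map_integral
    Real.continuous_negMulLog.continuousOn isClosed_Ici (.of_forall fun x => cylProb_nonneg u x)
    (integrable_cylProb u μ) (integrable_negMulLog_cylProb u)

theorem sum_negMulLog_integral_cylProb_le [IsProbabilityMeasure μ]
    (hpos : ∀ e, ∀ x ∈ sys.Ki (sys.edgeI e), 0 < sys.p e x) (hxs : ∀ v, xs v ∈ sys.Ki v) (n : ℕ) :
    ∑ u : Fin n → E, Real.negMulLog (∫ x, sys.cylProb u x ∂μ) ≤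
      ∫ x, ∑ u : Fin n → E, sys.cylProb u x * -Real.log (sys.basePointProb xs u) ∂μ + (N - 1) := by
  rw [← sum_integral_cylProb_mul, ← sum_basePointProb sys xs n,
    ← sum_integral_cylProb (sys := sys) (μ := μ) n]
  refine sum_negMulLog_le (fun u => integral_nonneg (cylProb_nonneg u))
    (fun u => Finset.sum_nonneg fun v _ => cylProb_nonneg u (xs v)) fun u hu => ?_
  obtain ⟨x, hx⟩ : ∃ x, 0 < sys.cylProb u x := by
    by_contra! hle
    exact hu.not_ge (integral_nonpos hle)
  exact basePointProb_pos hpos hxs hx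

theorem IsInvariant.exists_sum_negMulLog_integral_cylProb_le (hμ : sys.IsInvariant μ) (ha1 : a < 1)
    (hcontr : sys.ContractiveOnAvg a) {δ : ℝ} (hδ0 : 0 < δ)
    (hδ : ∀ e, ∀ x ∈ sys.Ki (sys.edgeI e), δ ≤ sys.p e x)
    (hp : ∀ e, UniformContinuousOn (sys.p e) (sys.Ki (sys.edgeI e)))
    (hxs : ∀ v, xs v ∈ sys.Ki v) (hint : Integrable (sys.baseDist xs) μ) {ε : ℝ} (hε : 0 < ε) :
    ∃ D, ∀ n : ℕ, ∑ u : Fin n → E, Real.negMulLog (∫ x, sys.cylProb u x ∂μ) ≤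
      n * (∫ x, sys.localEntropy x ∂μ + ε) + D := by
  have := hμ.1
  have hpos (e : E) (x : K) (hx : x ∈ sys.Ki (sys.edgeI e)) : 0 < sys.p e x :=
    hδ0.trans_le (hδ e x hx)
  obtain ⟨D, hD, hlog⟩ := exists_log_p_sub_log_p_le hδ0 hδ hp hε
  refine ⟨D / (1 - a) * ∫ x, sys.baseDist xs x ∂μ + (N - 1), fun n => ?_⟩
  have hpointwise (x : K) :
      ∑ u : Fin n → E, sys.cylProb u x * -Real.log (sys.basePointProb xs u) ≤
        sys.wordEntropy n x + (n * ε + D / (1 - a) * sys.baseDist xs x) := by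
    obtain ⟨v, hx⟩ := sys.Ki_cover x
    rw [baseDist_of_mem xs hx]
    exact (sum_cylProb_mul_neg_log_basePointProb_le hpos hx (hxs v) n).trans <| by
      gcongr
      exact relEntropy_le ha1 hcontr hpos hD hlog n hx (hxs v)
  have hrem : Integrable (fun x => n * ε + D / (1 - a) * sys.baseDist xs x) μ :=
    (integrable_const _).add (hint.const_mul _)
  calc _ ≤ ∫ x, ∑ u : Fin n → E, sys.cylProb u x * -Real.log (sys.basePointProb xs u) ∂μ +
          (N - 1) := sum_negMulLog_integral_cylProb_le hpos hxs n
    _ ≤ ∫ x, (sys.wordEntropy n x + (n * ε + D / (1 - a) * sys.baseDist xs x)) ∂μ + (N - 1) := by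
        refine add_le_add_left (integral_mono ?_ ((integrable_wordEntropy n).add hrem) hpointwise) _
        exact integrable_finsetSum _ fun u _ => (integrable_cylProb u μ).mul_const _
    _ = n * (∫ x, sys.localEntropy x ∂μ + ε) +
          (D / (1 - a) * ∫ x, sys.baseDist xs x ∂μ + (N - 1)) := by
        rw [integral_add (integrable_wordEntropy n) hrem,
          integral_add (integrable_const _) (hint.const_mul _),
          integral_const_mul (D / (1 - a)), hμ.integral_wordEntropy, integral_const,
          probReal_univ, one_smul]
        ring

end BasePoints

end MarkovSystem

theorem tendsto_div_natCast_of_le_of_le {b : ℕ → ℝ} {h : ℝ} (hlower : ∀ n : ℕ, n * h ≤ b n)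
    (hupper : ∀ ε > 0, ∃ D, ∀ n : ℕ, b n ≤ n * (h + ε) + D) :
    Tendsto (fun n : ℕ => b n / n) atTop (nhds h) := by
  refine tendsto_order.2 ⟨fun l hl => ?_, fun r hr => ?_⟩
  · filter_upwards [eventually_gt_atTop 0] with n hn
    exact hl.trans_le ((le_div_iff₀' (Nat.cast_pos.2 hn)).2 (hlower n))
  · obtain ⟨D, hD⟩ := hupper ((r - h) / 2) (half_pos (sub_pos.2 hr))
    filter_upwards [eventually_gt_atTop 0,
      (tendsto_const_div_atTop_nhds_zero_nat D).eventually_lt_const (half_pos (sub_pos.2 hr))]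
      with n hn hDn
    calc b n / n ≤ (n * (h + (r - h) / 2) + D) / n := by gcongr; exact hD n
      _ = h + (r - h) / 2 + D / n := by field_simp
      _ < r := by linarith

namespace IsMarkovMeasure

variable {K : Type*} [MetricSpace K] [MeasurableSpace K] {N : ℕ} {E : Type*} [Fintype E]
  [MeasurableSpace E] {sys : MarkovSystem K N E} {μ : Measure K} {M : Measure (ℤ → E)}
  (hM : IsMarkovMeasure sys μ M)

include hM

theorem measureReal_window (m : ℤ) {n : ℕ} (u : Fin n → E) :
    M.real (window m n ⁻¹' {u}) = ∫ x, sys.cylProb u x ∂μ := by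
  have hcyl : window m n ⁻¹' {u} = {σ | ∀ j : Fin (List.ofFn u).length,
      σ (m + (j : ℕ)) = (List.ofFn u).get j} := by
    ext σ
    simp only [Set.mem_preimage, Set.mem_singleton_iff, funext_iff, window, Set.mem_ofPred_eq,
      List.get_ofFn]
    exact ⟨fun h j => h (j.cast List.length_ofFn), fun h j => h (j.cast List.length_ofFn.symm)⟩
  rw [measureReal_def, hcyl, hM.2]
  exact ENNReal.toReal_ofReal (integral_nonneg fun x => MarkovSystem.cylProb_nonneg u x)

theorem blockEntropy_eq (n : ℕ) :
    blockEntropy M n = ∑ u : Fin n → E, Real.negMulLog (∫ x, sys.cylProb u x ∂μ) := by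
  simp only [blockEntropy, partEntropy_eq_sum_negMulLog, hM.measureReal_window]

theorem tendsto_blockEntropy_div {a : ℝ} (ha1 : a < 1) (hcontr : sys.ContractiveOnAvg a)
    (hμ : sys.IsInvariant μ) {δ : ℝ} (hδ0 : 0 < δ)
    (hδ : ∀ e, ∀ x ∈ sys.Ki (sys.edgeI e), δ ≤ sys.p e x)
    (hp : ∀ e, UniformContinuousOn (sys.p e) (sys.Ki (sys.edgeI e)))
    {xs : Fin N → K} (hxs : ∀ v, xs v ∈ sys.Ki v) (hint : Integrable (sys.baseDist xs) μ) :
    Tendsto (fun n : ℕ => blockEntropy M n / n) atTop (nhds (∫ x, sys.localEntropy x ∂μ)) := by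
  have := hμ.1
  simp only [hM.blockEntropy_eq]
  refine tendsto_div_natCast_of_le_of_le (fun n => ?_) fun ε hε =>
    hμ.exists_sum_negMulLog_integral_cylProb_le ha1 hcontr hδ0 hδ hp hxs hint hε
  rw [← hμ.integral_wordEntropy]
  exact MarkovSystem.integral_wordEntropy_le n

variable [MeasurableSingletonClass E]

theorem integral_window [IsFiniteMeasure μ] (m : ℤ) {n : ℕ} (G : (Fin n → E) → ℝ) :
    ∫ σ, G (window m n σ) ∂M = ∫ x, ∑ u, sys.cylProb u x * G u ∂μ := by
  have := hM.1
  simp only [integral_comp_eq_sum (measurable_window m n), hM.measureReal_window,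
    MarkovSystem.sum_integral_cylProb_mul]

theorem measurePreserving_shift : MeasurePreserving shift M M := by
  have := hM.1
  have := Measure.isProbabilityMeasure_map (μ := M) (measurable_shift (E := E)).aemeasurable
  refine ⟨measurable_shift, ext_of_map_centralWindow fun n => ?_⟩
  have hcomp : centralWindow n ∘ shift = (window (-n + 1) (2 * n + 1) : (ℤ → E) → _) :=
    funext (window_shift_iterate (-n) (2 * n + 1) 1)
  rw [Measure.map_map (measurable_centralWindow n) measurable_shift, hcomp]
  have := Measure.isProbabilityMeasure_map (μ := M)
    (measurable_window (E := E) (-n + 1) (2 * n + 1)).aemeasurable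
  have := Measure.isProbabilityMeasure_map (μ := M)
    (measurable_centralWindow (E := E) n).aemeasurable
  refine Measure.ext_of_singleton fun u => (measureReal_eq_measureReal_iff).1 ?_
  rw [map_measureReal_apply (measurable_window _ _) (measurableSet_singleton u),
    map_measureReal_apply (measurable_centralWindow _) (measurableSet_singleton u),
    centralWindow, hM.measureReal_window, hM.measureReal_window]

end IsMarkovMeasure

theorem ext_of_forall_lipschitz_integral {X : Type*} [PseudoEMetricSpace X] [MeasurableSpace X]
    [BorelSpace X] {μ ν : Measure X} [IsProbabilityMeasure μ] [IsProbabilityMeasure ν]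
    (h : ∀ (g : X → ℝ) (L : NNReal) (B : ℝ), LipschitzWith L g → (∀ x, |g x| ≤ B) →
      ∫ x, g x ∂μ = ∫ x, g x ∂ν) : μ = ν := by
  let P : ProbabilityMeasure X := ⟨μ, inferInstance⟩
  let Q : ProbabilityMeasure X := ⟨ν, inferInstance⟩
  have hlim : Tendsto (fun _ : ℕ => P) atTop (nhds Q) := by
    refine tendsto_iff_forall_lipschitz_integral_tendsto.2 fun g ⟨C, hC⟩ ⟨L, hL⟩ => ?_
    obtain ⟨B, hB⟩ : ∃ B, ∀ x, |g x| ≤ B := by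
      obtain ⟨B, hB⟩ := (Metric.isBounded_range_iff.2 ⟨C, hC⟩).exists_norm_le
      exact ⟨B, fun x => hB _ (Set.mem_range_self x)⟩
    exact tendsto_const_nhds.congr fun _ => (h g L B hL hB).symm
  exact congrArg ProbabilityMeasure.toMeasure
    (tendsto_nhds_unique (tendsto_const_nhds (x := P)) hlim)

namespace MarkovSystem

variable {K : Type*} [MetricSpace K] [MeasurableSpace K] {N : ℕ} {E : Type*} [Fintype E]
  {sys : MarkovSystem K N E} {xs : Fin N → K} {n : ℕ} {x : K} {a : ℝ}

/-- The image under the word `u` of the base point of the set on which `u` starts. The coding map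
is the limit of these points along the past of a path. -/
def basePointImage (sys : MarkovSystem K N E) (xs : Fin N → K) (u : Fin (n + 1) → E) : K :=
  sys.cylMap u (xs (sys.edgeI (u 0)))

theorem comps_eq_cylMap_window (σ : ℤ → E) (m : ℕ) (x : K) :
    comps sys.w σ m x = sys.cylMap (window (-(m : ℤ)) (m + 1) σ) x := by
  induction m generalizing x with
  | zero => simp [comps, cylMap, window, List.ofFn_succ, wordMap]
  | succ m ih =>
    have hcons : (window (-((m + 1 : ℕ) : ℤ)) (m + 1 + 1) σ : Fin (m + 1 + 1) → E) =
        Fin.cons (σ (-((m : ℤ) + 1))) (window (-(m : ℤ)) (m + 1) σ) := by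
      funext j
      cases j using Fin.cases with
      | zero => simp [window]
      | succ j =>
        simp only [window, Fin.cons_succ, Fin.val_succ]
        congr 1
        push_cast
        ring
    rw [hcons, cylMap_cons, ← ih, comps]

theorem comps_base_eq_basePointImage (xs : Fin N → K) (σ : ℤ → E) (m : ℕ) :
    comps sys.w σ m (xs (sys.edgeI (σ (-(m : ℤ))))) =
      sys.basePointImage xs (window (-(m : ℤ)) (m + 1) σ) := by
  rw [comps_eq_cylMap_window, basePointImage, window, Fin.val_zero, Nat.cast_zero, add_zero]

theorem abs_markovOp_iterate_sub_le (ha0 : 0 ≤ a) (hcontr : sys.ContractiveOnAvg a)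
    (hxs : ∀ v, xs v ∈ sys.Ki v) {g : K → ℝ} {L : NNReal} (hg : LipschitzWith L g) (x : K) :
    |∑ u : Fin (n + 1) → E, sys.cylProb u x * g (sys.basePointImage xs u) -
        sys.markovOp^[n + 1] g x| ≤ L * a ^ (n + 1) * sys.baseDist xs x := by
  obtain ⟨v, hx⟩ := sys.Ki_cover x
  simp only [markovOp_iterate_apply, ← Finset.sum_sub_distrib, ← mul_sub]
  calc _ ≤ ∑ u : Fin (n + 1) → E, sys.cylProb u x *
          (L * dist (sys.cylMap u x) (sys.cylMap u (xs v))) :=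
        abs_sum_mul_le_sum_mul_of_pos (fun u => cylProb_nonneg u x) fun u hu => by
          rw [basePointImage, edgeI_eq_of_cylProb_pos hx hu, ← Real.dist_eq, dist_comm]
          exact hg.dist_le_mul _ _
    _ = L * ∑ u : Fin (n + 1) → E, sys.cylProb u x *
          dist (sys.cylMap u x) (sys.cylMap u (xs v)) := by
        rw [Finset.mul_sum]
        exact Finset.sum_congr rfl fun _ _ => mul_left_comm _ _ _
    _ ≤ L * (a ^ (n + 1) * dist x (xs v)) := by
        gcongr
        exact sum_cylProb_mul_dist_le ha0 hcontr (n + 1) hx (hxs v)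
    _ = L * a ^ (n + 1) * sys.baseDist xs x := by rw [baseDist_of_mem xs hx, mul_assoc]

end MarkovSystem

namespace IsMarkovMeasure

variable {K : Type*} [MetricSpace K] [MeasurableSpace K] {N : ℕ} {E : Type*} [Fintype E]
  [MeasurableSpace E] [MeasurableSingletonClass E] {sys : MarkovSystem K N E} {μ : Measure K}
  {M : Measure (ℤ → E)} {xs : Fin N → K} {a : ℝ} [BorelSpace K]

theorem abs_integral_basePointImage_sub_le (hM : IsMarkovMeasure sys μ M) (hμ : sys.IsInvariant μ)
    (ha0 : 0 ≤ a) (hcontr : sys.ContractiveOnAvg a) (hxs : ∀ v, xs v ∈ sys.Ki v)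
    (hint : Integrable (sys.baseDist xs) μ) {g : K → ℝ} {L : NNReal} {B : ℝ}
    (hg : LipschitzWith L g) (hB : ∀ x, |g x| ≤ B) (n : ℕ) :
    |∫ σ, g (sys.basePointImage xs (window (-(n : ℤ)) (n + 1) σ)) ∂M - ∫ x, g x ∂μ| ≤
      L * a ^ (n + 1) * ∫ x, sys.baseDist xs x ∂μ := by
  have := hμ.1
  have hgm : Measurable g := hg.continuous.measurable
  rw [hM.integral_window (-(n : ℤ)) fun u => g (sys.basePointImage xs u),
    ← hμ.integral_markovOp_iterate hgm hB (n + 1), ← integral_sub, ← integral_const_mul,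
    ← Real.norm_eq_abs]
  · exact norm_integral_le_of_norm_le (hint.const_mul _) (.of_forall fun x =>
      MarkovSystem.abs_markovOp_iterate_sub_le ha0 hcontr hxs hg x)
  · exact integrable_finsetSum _ fun u _ => (MarkovSystem.integrable_cylProb u μ).mul_const _
  · exact .of_bound (MarkovSystem.measurable_markovOp_iterate hgm _).aestronglyMeasurable B
      (.of_forall (MarkovSystem.abs_markovOp_iterate_le hB _))

theorem map_codingMap_eq (hM : IsMarkovMeasure sys μ M) (hμ : sys.IsInvariant μ)
    (ha0 : 0 ≤ a) (ha1 : a < 1) (hcontr : sys.ContractiveOnAvg a) (hxs : ∀ v, xs v ∈ sys.Ki v)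
    (hint : Integrable (sys.baseDist xs) μ) {F : (ℤ → E) → K} (hFm : Measurable F)
    (hF : ∀ᵐ σ ∂M, Tendsto (fun n : ℕ => comps sys.w σ n (xs (sys.edgeI (σ (-(n : ℤ))))))
      atTop (nhds (F σ))) :
    M.map F = μ := by
  have := hμ.1
  have := hM.1
  have := Measure.isProbabilityMeasure_map (μ := M) hFm.aemeasurable
  refine ext_of_forall_lipschitz_integral fun g L B hg hB => ?_
  rw [integral_map hFm.aemeasurable hg.continuous.measurable.aestronglyMeasurable]
  have hcoding : Tendsto (fun n : ℕ =>
      ∫ σ, g (sys.basePointImage xs (window (-(n : ℤ)) (n + 1) σ)) ∂M) atTop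
      (nhds (∫ σ, g (F σ) ∂M)) := by
    refine tendsto_integral_of_dominated_convergence (fun _ => B) (fun n => ?_)
      (integrable_const B) (fun n => .of_forall fun σ => hB _) ?_
    · exact ((measurable_of_finite fun u => g (sys.basePointImage xs u)).comp
        (measurable_window _ _)).aestronglyMeasurable
    · filter_upwards [hF] with σ hσ
      simp only [MarkovSystem.comps_base_eq_basePointImage] at hσ
      exact (hg.continuous.tendsto _).comp hσ
  refine tendsto_nhds_unique hcoding (tendsto_iff_dist_tendsto_zero.2 <| squeeze_zero
    (fun n => dist_nonneg)
    (hM.abs_integral_basePointImage_sub_le hμ ha0 hcontr hxs hint hg hB) ?_)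
  simpa using (((tendsto_pow_atTop_nhds_zero_of_lt_one ha0 ha1).comp
    (tendsto_add_atTop_nat 1)).const_mul (L : ℝ)).mul_const (∫ x, sys.baseDist xs x ∂μ)

end IsMarkovMeasure

theorem lintegral_Ioc_inv_eq_top {c : ℝ} (hc : 0 < c) :
    ∫⁻ t in Set.Ioc 0 c, ENNReal.ofReal t⁻¹ = ⊤ := by
  by_contra hne
  have hint : IntegrableOn (fun t : ℝ => t⁻¹) (Set.Ioc 0 c) :=
    ⟨measurable_inv.aestronglyMeasurable, (hasFiniteIntegral_iff_ofReal <|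
      (ae_restrict_mem measurableSet_Ioc).mono fun t ht => inv_nonneg.2 ht.1.le).2
      (lt_top_iff_ne_top.2 hne)⟩
  rw [← intervalIntegrable_iff_integrableOn_Ioc_of_le hc.le, intervalIntegrable_inv_iff] at hint
  exact hint.elim hc.ne fun h => h Set.left_mem_uIcc

theorem DiniContinuous.uniformContinuous {X : Type*} [PseudoMetricSpace X] {h : X → ℝ}
    (hh : DiniContinuous h) : UniformContinuous h := by
  obtain ⟨c, hc, hfin⟩ := hh
  rw [Metric.uniformContinuous_iff]
  by_contra! hcon
  obtain ⟨ε, hε, hfar⟩ := hcon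
  have hmod {t : ℝ} (ht : 0 < t) : ENNReal.ofReal ε ≤ modulus h t := by
    obtain ⟨x, y, hxy, hεxy⟩ := hfar t ht
    exact le_iSup_of_le x <| le_iSup_of_le y <| le_iSup_of_le hxy.le <|
      ENNReal.ofReal_le_ofReal hεxy
  refine hfin.ne (top_le_iff.1 ?_)
  calc (⊤ : ℝ≥0∞) = ENNReal.ofReal ε * ∫⁻ t in Set.Ioc (0 : ℝ) c, ENNReal.ofReal t⁻¹ := by
        rw [lintegral_Ioc_inv_eq_top hc, ENNReal.mul_top (ENNReal.ofReal_pos.2 hε).ne']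
    _ = ∫⁻ t in Set.Ioc (0 : ℝ) c, ENNReal.ofReal ε * ENNReal.ofReal t⁻¹ :=
        (lintegral_const_mul' _ _ ENNReal.ofReal_ne_top).symm
    _ ≤ ∫⁻ t in Set.Ioc (0 : ℝ) c, modulus h t / ENNReal.ofReal t :=
        setLIntegral_mono' measurableSet_Ioc fun t ht => by
          rw [ENNReal.ofReal_inv_of_pos ht.1, ← div_eq_mul_inv]
          exact ENNReal.div_le_div_right (hmod ht.1) _

theorem entropy_of_generalized_markov_shift_pushforward_general
    {K : Type*} [MetricSpace K] [MeasurableSpace K] [BorelSpace K]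
    {N : ℕ} {E : Type*} [Fintype E] [MeasurableSpace E] [MeasurableSingletonClass E]
    (sys : MarkovSystem K N E) {a : ℝ} (ha0 : 0 ≤ a) (ha1 : a < 1)
    (hcontr : sys.ContractiveOnAvg a) {δ : ℝ} (hδpos : 0 < δ)
    (hδ : ∀ e, ∀ x ∈ sys.Ki (sys.edgeI e), δ ≤ sys.p e x)
    (hp : ∀ e, UniformContinuousOn (sys.p e) (sys.Ki (sys.edgeI e)))
    {μ : Measure K} (hμ : sys.IsInvariant μ)
    {M : Measure (ℤ → E)} (hM : IsMarkovMeasure sys μ M)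
    {F : (ℤ → E) → K} (hF : IsCodingMap sys M F) {xs : Fin N → K}
    (hfin : (∑ v : Fin N, ∫⁻ x in sys.Ki v, ENNReal.ofReal (dist x (xs v)) ∂μ) < ⊤) :
    ksEntropy M shift = ENNReal.ofReal
      (-∑ e : E, ∫ x in sys.Ki (sys.edgeI e),
        sys.p e x * Real.log (sys.p e x) ∂(Measure.map F M)) := by
  have := hμ.1
  have := hM.1
  obtain ⟨hFm, ys, hys, hlim⟩ := hF
  have hint := MarkovSystem.integrable_baseDist hfin ys
  have hshift := hM.measurePreserving_shift
  have hblock := hM.tendsto_blockEntropy_div ha1 hcontr hμ hδpos hδ hp hys hint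
  rw [hM.map_codingMap_eq hμ ha0 ha1 hcontr hys hint hFm hlim, MarkovSystem.neg_sum_setIntegral_eq,
    ksEntropy_shift hshift, tendsto_nhds_unique hblock
      ((subadditive_blockEntropy hshift).tendsto_lim (bddBelow_range_blockEntropy_div M))]

/-- Entropy formula for the generalized Markov shift, pushforward form:
`h_M(S) = -∑_{e} ∫_{K_{i(e)}} p_e log p_e d(F_*M)`. -/
theorem entropy_of_generalized_markov_shift_pushforward
    {K : Type*} [MetricSpace K] [MeasurableSpace K] [BorelSpace K]
    {N : ℕ} {E : Type*} [Fintype E] [MeasurableSpace E] [MeasurableSingletonClass E]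
    (sys : MarkovSystem K N E) (a : ℝ) (ha0 : 0 < a) (ha1 : a < 1)
    (hcontr : sys.ContractiveOnAvg a)
    (hrelcpt : ∀ s : Set K, Bornology.IsBounded s → IsCompact (closure s))
    (hopen : ∀ v, IsOpen (sys.Ki v))
    (δ : ℝ) (hδpos : 0 < δ)
    (hδ : ∀ e, ∀ x ∈ sys.Ki (sys.edgeI e), δ ≤ sys.p e x)
    (hdini : ∀ e, DiniContinuous fun x : sys.Ki (sys.edgeI e) => sys.p e (x : K))
    (hsurj : Function.Surjective sys.edgeI)
    (μ : Measure K) (hμ : sys.IsInvariant μ)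
    (M : Measure (ℤ → E)) (hM : IsMarkovMeasure sys μ M)
    (F : (ℤ → E) → K) (hF : IsCodingMap sys M F)
    (xs : Fin N → K) (hxs : ∀ v, xs v ∈ sys.Ki v)
    (hfin : (∑ v : Fin N, ∫⁻ x in sys.Ki v, ENNReal.ofReal (dist x (xs v)) ∂μ) < ⊤) :
    ksEntropy M shift = ENNReal.ofReal
      (-∑ e : E, ∫ x in sys.Ki (sys.edgeI e),
        sys.p e x * Real.log (sys.p e x) ∂(Measure.map F M)) :=
  entropy_of_generalized_markov_shift_pushforward_general sys ha0.le ha1 hcontr hδpos hδ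
    (fun e => uniformContinuousOn_iff_restrict.2 (hdini e).uniformContinuous) hμ hM hF hfin
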